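/- (Theorem 1) Let σ_N > 0, σ_S > 0 and set ρ = σ_S²/σ_N². The mutual information I_XY := h_Y − h_{Y|X}, where h_Y = −∫₀^∞ p_Y(y) log p_Y(y) dy with p_Y(y) = ∫₀^∞ p_{Y|X}(y|x) p_X(x) dx, and h_{Y|X} = −∫₀^∞ p_X(x) ( ∫₀^∞ p_{Y|X}(y|x) log p_{Y|X}(y|x) dy ) dx, is given in closed form by I_XY = log( ρ · √(1 + ρ⁻¹) ) + ρ⁻¹ · log √(1 + ρ) − ρ + ρ⁻¹ · √(1 + ρ⁻¹) · F(ρ) + ψ(ρ⁻¹) − ψ(1) − 1, where F(ρ) = ∫₀^∞ ξ · K₁(√(1 + ρ⁻¹) · ξ) · I₁(ξ) · log I₁(ξ) dξ. -/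

import Mathlib

open Real MeasureTheory Set Filter

/-- Modified Bessel function of the first kind of order one,
`I₁(z) = ∑_{k=0}^∞ (z/2)^(2k+1) / (k! (k+1)!)`. -/
noncomputable def besselI1 (z : ℝ) : ℝ :=
  ∑' k : ℕ, (z / 2) ^ (2 * k + 1) / ((Nat.factorial k : ℝ) * (Nat.factorial (k + 1) : ℝ))

/-- Modified Bessel function of the second kind of order one,
`K₁(z) = ∫₀^∞ exp (−z cosh t) cosh t dt`. -/
noncomputable def besselK1 (z : ℝ) : ℝ :=
  ∫ t in Ioi (0 : ℝ), Real.exp (-z * Real.cosh t) * Real.cosh t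

/-- Digamma function `ψ(x) = d/dx log Γ(x)`. -/
noncomputable def digamma (x : ℝ) : ℝ :=
  deriv (fun y : ℝ => Real.log (Real.Gamma y)) x

/-- Conditional output density of the noncentral chi channel with four degrees of freedom. -/
noncomputable def condDensity (σN x y : ℝ) : ℝ :=
  (2 / σN ^ 2) * (y ^ 2 / x) * Real.exp (-(x ^ 2 + y ^ 2) / σN ^ 2) *
    besselI1 (2 * x * y / σN ^ 2)

/-- Rayleigh input density with mean-square `σS²`. -/
noncomputable def rayleighDensity (σS x : ℝ) : ℝ :=
  (2 * x / σS ^ 2) * Real.exp (-x ^ 2 / σS ^ 2)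

/-- `F(ρ) = ∫₀^∞ ξ K₁(√(1+ρ⁻¹) ξ) I₁(ξ) log I₁(ξ) dξ`. -/
noncomputable def Fint (ρ : ℝ) : ℝ :=
  ∫ ξ in Ioi (0 : ℝ),
    ξ * besselK1 (Real.sqrt (1 + ρ⁻¹) * ξ) * besselI1 ξ * Real.log (besselI1 ξ)

/-- Closed-form mutual information of Theorem 1. -/
noncomputable def Ixy (ρ : ℝ) : ℝ :=
  Real.log (ρ * Real.sqrt (1 + ρ⁻¹)) + ρ⁻¹ * Real.log (Real.sqrt (1 + ρ)) - ρ +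
    ρ⁻¹ * Real.sqrt (1 + ρ⁻¹) * Fint ρ + digamma ρ⁻¹ - digamma 1 - 1

theorem factorial_two_mul_le (k : ℕ) :
    ((2 * k).factorial : ℝ) ≤ 4 ^ k * ((k.factorial : ℝ) * ((k + 1).factorial : ℝ)) := by
  have h1 : (2 * k).choose k * k.factorial * k.factorial = (2 * k).factorial := by
    have := Nat.choose_mul_factorial_mul_factorial (n := 2 * k) (k := k) (by omega)
    rwa [show 2 * k - k = k by omega] at this
  have h2 : (2 * k).choose k ≤ 4 ^ k := by
    have := Nat.choose_le_two_pow (2 * k) k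
    rwa [pow_mul] at this
  have h3 : k.factorial ≤ (k + 1).factorial := Nat.factorial_le (Nat.le_succ k)
  have h4 : (2 * k).factorial ≤ 4 ^ k * (k.factorial * (k + 1).factorial) := by
    rw [← h1, mul_assoc]
    gcongr
  exact_mod_cast h4

theorem besselI1_term_le {z : ℝ} (hz : 0 ≤ z) (k : ℕ) :
    (z / 2) ^ (2 * k + 1) / ((k.factorial : ℝ) * ((k + 1).factorial : ℝ)) ≤
      z / 2 * (z ^ (2 * k) / ((2 * k).factorial : ℝ)) := by
  have h := factorial_two_mul_le k
  have e : (z / 2) ^ (2 * k + 1) / ((k.factorial : ℝ) * ((k + 1).factorial : ℝ)) =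
      z / 2 * (z ^ (2 * k) / (4 ^ k * ((k.factorial : ℝ) * ((k + 1).factorial : ℝ)))) := by
    rw [pow_succ, div_pow, pow_mul 2 2 k, show (2 : ℝ) ^ 2 = 4 by norm_num]
    field_simp
  rw [e]
  gcongr

theorem summable_besselI1_term (z : ℝ) :
    Summable fun k : ℕ =>
      (z / 2) ^ (2 * k + 1) / ((k.factorial : ℝ) * ((k + 1).factorial : ℝ)) := by
  refine Summable.of_norm_bounded (((Real.hasSum_cosh |z|).summable).mul_left (|z| / 2))
    fun k => ?_
  have := besselI1_term_le (abs_nonneg z) k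
  simpa [abs_div, abs_mul] using this

theorem measurable_besselI1 : Measurable besselI1 := by
  refine measurable_of_tendsto_metrizable
    (f := fun n z => ∑ k ∈ Finset.range n,
      (z / 2) ^ (2 * k + 1) / ((k.factorial : ℝ) * ((k + 1).factorial : ℝ))) ?_ ?_
  · intro n
    fun_prop
  · rw [tendsto_pi_nhds]
    exact fun z => (summable_besselI1_term z).hasSum.tendsto_sum_nat

theorem half_le_besselI1 {z : ℝ} (hz : 0 ≤ z) : z / 2 ≤ besselI1 z := by
  have := (summable_besselI1_term z).le_tsum 0 (fun k _ => by positivity)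
  simpa [besselI1] using this

theorem besselI1_pos {z : ℝ} (hz : 0 < z) : 0 < besselI1 z :=
  (half_pos hz).trans_le (half_le_besselI1 hz.le)

theorem besselI1_le {z : ℝ} (hz : 0 ≤ z) : besselI1 z ≤ z / 2 * Real.exp z := by
  have h1 : besselI1 z ≤ z / 2 * Real.cosh z :=
    hasSum_le (fun k => besselI1_term_le hz k) (summable_besselI1_term z).hasSum
      ((Real.hasSum_cosh z).mul_left (z / 2))
  have h2 : Real.cosh z ≤ Real.exp z := by
    rw [Real.cosh_eq]
    have := Real.exp_le_exp.2 (show -z ≤ z by linarith)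
    linarith
  exact h1.trans (by gcongr)

theorem abs_log_besselI1_le {z : ℝ} (hz : 0 < z) :
    |Real.log (besselI1 z)| ≤ |Real.log (z / 2)| + z := by
  have h1 := Real.log_le_log (half_pos hz) (half_le_besselI1 hz.le)
  have h2 := Real.log_le_log (besselI1_pos hz) (besselI1_le hz.le)
  rw [Real.log_mul (by positivity) (by positivity), Real.log_exp] at h2
  rw [abs_le]
  have := neg_abs_le (Real.log (z / 2))
  have := le_abs_self (Real.log (z / 2))
  constructor <;> linarith

theorem integral_pow_mul_exp_neg_mul_sq {b : ℝ} (hb : 0 < b) (k : ℕ) :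
    ∫ x in Ioi (0 : ℝ), x ^ (2 * k + 1) * Real.exp (-b * x ^ 2) =
      (k.factorial : ℝ) / (2 * b ^ (k + 1)) := by
  have h := integral_rpow_mul_exp_neg_mul_rpow (p := 2) (q := 2 * k + 1) (b := b) two_pos
    (by have : (0 : ℝ) ≤ k := Nat.cast_nonneg k
        linarith) hb
  have e : ((2 : ℝ) * k + 1 + 1) / 2 = k + 1 := by ring
  rw [neg_div, e, Real.Gamma_nat_eq_factorial, Real.rpow_neg hb.le] at h
  have e2 : b ^ ((k : ℝ) + 1) = b ^ (k + 1) := by exact_mod_cast Real.rpow_natCast b (k + 1)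
  rw [e2] at h
  have e3 : ∫ x in Ioi (0 : ℝ), x ^ (2 * k + 1) * Real.exp (-b * x ^ 2) =
      ∫ x in Ioi (0 : ℝ), x ^ (2 * (k : ℝ) + 1) * Real.exp (-b * x ^ (2 : ℝ)) := by
    refine setIntegral_congr_fun measurableSet_Ioi fun x _ => ?_
    simp only [Real.rpow_two]
    congr 1
    exact_mod_cast (Real.rpow_natCast x (2 * k + 1)).symm
  rw [e3, h]
  field_simp

theorem integrableOn_pow_mul_exp_neg_mul_sq {b : ℝ} (hb : 0 < b) (n : ℕ) :
    IntegrableOn (fun x : ℝ => x ^ n * Real.exp (-b * x ^ 2)) (Ioi 0) := by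
  have h := integrableOn_rpow_mul_exp_neg_mul_sq hb (s := n)
    (by have : (0 : ℝ) ≤ n := Nat.cast_nonneg n
        linarith)
  simpa using h

theorem integral_pow_mul_exp_mul_besselI1_of_hasSum {b : ℝ} (hb : 0 < b) {c : ℝ} (hc : 0 < c) (m : ℕ)
    {A : ℝ}
    (hA : HasSum (fun k : ℕ => (c / 2) ^ (2 * k + 1) * ((k + m).factorial : ℝ) /
      ((k.factorial : ℝ) * ((k + 1).factorial : ℝ) * (2 * b ^ (k + m + 1)))) A) :
    ∫ x in Ioi (0 : ℝ), x ^ (2 * m) * Real.exp (-b * x ^ 2) * besselI1 (c * x) = A := by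
  set F : ℕ → ℝ → ℝ := fun k x => (c / 2) ^ (2 * k + 1) /
      ((k.factorial : ℝ) * ((k + 1).factorial : ℝ)) *
        (x ^ (2 * (k + m) + 1) * Real.exp (-b * x ^ 2)) with hF
  have hFi : ∀ k, IntegrableOn (F k) (Ioi 0) := fun k =>
    (integrableOn_pow_mul_exp_neg_mul_sq hb _).const_mul _
  have hFv : ∀ k, ∫ x in Ioi (0 : ℝ), F k x =
      (c / 2) ^ (2 * k + 1) * ((k + m).factorial : ℝ) /
      ((k.factorial : ℝ) * ((k + 1).factorial : ℝ) * (2 * b ^ (k + m + 1))) := fun k => by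
    rw [hF]
    simp only
    rw [integral_const_mul, integral_pow_mul_exp_neg_mul_sq hb, div_mul_div_comm]
  have hFn : ∀ k, ∫ x in Ioi (0 : ℝ), ‖F k x‖ = ∫ x in Ioi (0 : ℝ), F k x := fun k => by
    refine setIntegral_congr_fun measurableSet_Ioi fun x hx => ?_
    have hx' : 0 < x := hx
    exact Real.norm_of_nonneg (by simp only [hF]; positivity)
  have hs : HasSum (fun k => ∫ x in Ioi (0 : ℝ), F k x) (∫ x in Ioi (0 : ℝ), ∑' k, F k x) := by
    refine hasSum_integral_of_summable_integral_norm hFi ?_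
    simp_rw [hFn, hFv]
    exact hA.summable
  simp_rw [hFv] at hs
  rw [← hs.unique hA]
  refine setIntegral_congr_fun measurableSet_Ioi fun x _ => ?_
  simp only [besselI1, ← tsum_mul_left]
  refine tsum_congr fun k => ?_
  simp only [hF]
  rw [show c * x / 2 = c / 2 * x by ring, mul_pow, show 2 * (k + m) + 1 = 2 * m + (2 * k + 1) by ring,
    pow_add x (2 * m)]
  ring

theorem two_pow_two_mul_add_one (k : ℕ) : (2 : ℝ) ^ (2 * k + 1) = 2 * 4 ^ k := by
  rw [pow_succ, pow_mul]
  norm_num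
  ring

theorem integral_exp_mul_besselI1 {b : ℝ} (hb : 0 < b) {c : ℝ} (hc : 0 < c) :
    ∫ x in Ioi (0 : ℝ), Real.exp (-b * x ^ 2) * besselI1 (c * x) =
      c⁻¹ * (Real.exp (c ^ 2 / (4 * b)) - 1) := by
  have h := integral_pow_mul_exp_mul_besselI1_of_hasSum hb hc 0 (A := c⁻¹ * (Real.exp (c ^ 2 / (4 * b)) - 1)) ?_
  · simpa using h
  · have h1 : HasSum (fun k : ℕ => (c ^ 2 / (4 * b)) ^ k / (k.factorial : ℝ))
        (Real.exp (c ^ 2 / (4 * b))) := by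
      rw [Real.exp_eq_exp_ℝ]
      exact NormedSpace.expSeries_div_hasSum_exp _
    have h2 := (hasSum_nat_add_iff' 1).2 h1
    have h3 := h2.mul_left c⁻¹
    simp only [Finset.range_one, Finset.sum_singleton, pow_zero, Nat.factorial_zero,
      Nat.cast_one, div_one] at h3
    refine Eq.subst (motive := fun f => HasSum f _) (funext fun k => Eq.symm ?_) h3
    rw [add_zero, div_pow (c ^ 2), mul_pow, div_pow, two_pow_two_mul_add_one, ← pow_mul]
    field_simp
    ring

theorem integral_sq_mul_exp_mul_besselI1 {b : ℝ} (hb : 0 < b) {c : ℝ} (hc : 0 < c) :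
    ∫ x in Ioi (0 : ℝ), x ^ 2 * Real.exp (-b * x ^ 2) * besselI1 (c * x) =
      c / (4 * b ^ 2) * Real.exp (c ^ 2 / (4 * b)) := by
  have h := integral_pow_mul_exp_mul_besselI1_of_hasSum hb hc 1
    (A := c / (4 * b ^ 2) * Real.exp (c ^ 2 / (4 * b))) ?_
  · simpa using h
  · have h1 : HasSum (fun k : ℕ => (c ^ 2 / (4 * b)) ^ k / (k.factorial : ℝ))
        (Real.exp (c ^ 2 / (4 * b))) := by
      rw [Real.exp_eq_exp_ℝ]
      exact NormedSpace.expSeries_div_hasSum_exp _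
    refine Eq.subst (motive := fun f => HasSum f _) (funext fun k => Eq.symm ?_)
      (h1.mul_left (c / (4 * b ^ 2)))
    rw [div_pow (c ^ 2), mul_pow, div_pow, two_pow_two_mul_add_one, ← pow_mul]
    field_simp
    ring

theorem hasDerivAt_log_Gamma {x : ℝ} (hx : 0 < x) :
    HasDerivAt (fun y : ℝ => Real.log (Real.Gamma y)) (digamma x) x := by
  refine DifferentiableAt.hasDerivAt (DifferentiableAt.log (Real.differentiableAt_Gamma ?_)
    (Real.Gamma_pos_of_pos hx).ne')
  intro m h
  have : (0 : ℝ) ≤ m := Nat.cast_nonneg m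
  linarith

theorem digamma_add_one {x : ℝ} (hx : 0 < x) : digamma (x + 1) = digamma x + x⁻¹ := by
  have h1 : HasDerivAt (fun y : ℝ => Real.log (Real.Gamma (y + 1))) (digamma (x + 1)) x :=
    HasDerivAt.comp_add_const x 1 (hasDerivAt_log_Gamma (by linarith))
  have h2 : HasDerivAt (fun y : ℝ => Real.log (Real.Gamma y) + Real.log y)
      (digamma x + x⁻¹) x := (hasDerivAt_log_Gamma hx).add (Real.hasDerivAt_log hx.ne')
  refine h1.unique (h2.congr_of_eventuallyEq ?_)
  filter_upwards [lt_mem_nhds hx] with y hy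
  rw [Real.Gamma_add_one hy.ne', Real.log_mul hy.ne' (Real.Gamma_pos_of_pos hy).ne', add_comm]

theorem digamma_one_eq_integral :
    digamma 1 = ∫ t in Ioi (0 : ℝ), Real.log t * Real.exp (-t) := by
  have h1 := Complex.hasDerivAt_GammaIntegral (s := ((1 : ℝ) : ℂ)) (by simp)
  have h2 : HasDerivAt Complex.Gamma _ ((1 : ℝ) : ℂ) := h1.congr_of_eventuallyEq (by
    have : IsOpen {s : ℂ | 0 < s.re} := Complex.continuous_re.isOpen_preimage _ isOpen_Ioi
    filter_upwards [this.mem_nhds (by simp)] with a ha using Complex.Gamma_eq_integral ha)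
  have h3 : HasDerivAt Real.Gamma _ 1 := h2.real_of_complex
  have h4 := (h3.log (by simp)).unique (hasDerivAt_log_Gamma one_pos)
  rw [← h4, Real.Gamma_one, div_one]
  have e : ∫ t in Ioi (0 : ℝ), (t : ℂ) ^ (((1 : ℝ) : ℂ) - 1) * (Real.log t * Real.exp (-t)) =
      ((∫ t in Ioi (0 : ℝ), Real.log t * Real.exp (-t) : ℝ) : ℂ) := by
    rw [← integral_complex_ofReal]
    refine setIntegral_congr_fun measurableSet_Ioi fun x _ => ?_
    simp
  rw [e, Complex.ofReal_re]

theorem integrableOn_mul_log_mul_exp {a : ℝ} (ha : 0 < a) :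
    IntegrableOn (fun x : ℝ => x * Real.log x * Real.exp (-a * x ^ 2)) (Ioi 0) := by
  have h := (integrableOn_pow_mul_exp_neg_mul_sq ha 0).add (integrableOn_pow_mul_exp_neg_mul_sq ha 2)
  refine Integrable.mono' h (by fun_prop) ?_
  refine ae_restrict_of_forall_mem measurableSet_Ioi fun x hx => ?_
  have hx' : 0 < x := hx
  have h1 : |x * Real.log x| ≤ 1 + x ^ 2 := by
    rcases le_or_gt x 1 with h | h
    · have := Real.abs_log_mul_self_lt x hx' h
      rw [mul_comm x]
      nlinarith [sq_nonneg x]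
    · rw [abs_of_nonneg (mul_nonneg hx'.le (Real.log_nonneg h.le))]
      nlinarith [Real.log_le_sub_one_of_pos hx']
  rw [norm_mul, Real.norm_eq_abs, Real.norm_of_nonneg (Real.exp_pos _).le]
  simp only [Pi.add_apply, pow_zero, ← add_mul]
  gcongr

theorem integral_mul_log_mul_exp {a : ℝ} (ha : 0 < a) :
    ∫ x in Ioi (0 : ℝ), x * Real.log x * Real.exp (-a * x ^ 2) =
      (digamma 1 - Real.log a) / (4 * a) := by
  have h1 : digamma 1 =
      ∫ x in Ioi (0 : ℝ), (2 * a * x) * (Real.log (a * x ^ 2) * Real.exp (-(a * x ^ 2))) := by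
    rw [digamma_one_eq_integral]
    have hs : (fun x : ℝ => a * x ^ 2) '' Ioi 0 = Ioi 0 := by
      ext y
      constructor
      · rintro ⟨x, hx, rfl⟩
        have : 0 < x := hx
        exact mul_pos ha (by positivity)
      · intro hy
        have hy' : 0 < y := hy
        refine ⟨√(y / a), Real.sqrt_pos.2 (by positivity), ?_⟩
        simp only
        rw [Real.sq_sqrt (by positivity)]
        field_simp
    have hd : ∀ x ∈ Ioi (0 : ℝ), HasDerivWithinAt (fun x : ℝ => a * x ^ 2) (2 * a * x) (Ioi 0) x := by
      intro x _
      have := ((hasDerivAt_pow 2 x).const_mul a).hasDerivWithinAt (s := Ioi 0)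
      refine this.congr_deriv ?_
      norm_num
      ring
    have hi : InjOn (fun x : ℝ => a * x ^ 2) (Ioi 0) := by
      intro x hx y hy hxy
      have hx' : 0 < x := hx
      have hy' : 0 < y := hy
      exact (pow_left_inj₀ hx'.le hy'.le two_ne_zero).1 (mul_left_cancel₀ ha.ne' hxy)
    conv_lhs => rw [← hs]
    rw [integral_image_eq_integral_abs_deriv_smul measurableSet_Ioi hd hi]
    refine setIntegral_congr_fun measurableSet_Ioi fun x hx => ?_
    have hx' : 0 < x := hx
    simp only [smul_eq_mul]
    rw [abs_of_pos (by positivity)]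
  have h2 : ∫ x in Ioi (0 : ℝ), (2 * a * x) * (Real.log (a * x ^ 2) * Real.exp (-(a * x ^ 2))) =
      ∫ x in Ioi (0 : ℝ), (4 * a * (x * Real.log x * Real.exp (-a * x ^ 2)) +
        2 * a * Real.log a * (x ^ (2 * 0 + 1) * Real.exp (-a * x ^ 2))) := by
    refine setIntegral_congr_fun measurableSet_Ioi fun x hx => ?_
    have hx' : 0 < x := hx
    rw [Real.log_mul ha.ne' (by positivity), Real.log_pow, neg_mul]
    push_cast
    ring
  rw [h2, integral_add ((integrableOn_mul_log_mul_exp ha).const_mul _)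
    ((integrableOn_pow_mul_exp_neg_mul_sq ha _).const_mul _), integral_const_mul,
    integral_const_mul, integral_pow_mul_exp_neg_mul_sq ha] at h1
  simp only [Nat.factorial_zero, Nat.cast_one, zero_add, pow_one] at h1
  field_simp at h1 ⊢
  linarith

theorem integral_rpow_mul_one_sub_rpow {c b : ℝ} (hc : 0 < c) (hb : 0 < b) :
    ∫ w in Ioo (0 : ℝ) 1, w ^ (c - 1) * (1 - w) ^ (b - 1) =
      Real.Gamma c * Real.Gamma b / Real.Gamma (c + b) := by
  have h := ProbabilityTheory.beta_eq_betaIntegralReal c b hc hb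
  rw [ProbabilityTheory.beta] at h
  rw [h, Complex.betaIntegral, intervalIntegral.integral_of_le (by norm_num),
    integral_Ioc_eq_integral_Ioo]
  have e : ∫ x in Ioo (0 : ℝ) 1, (x : ℂ) ^ ((c : ℂ) - 1) * (1 - (x : ℂ)) ^ ((b : ℂ) - 1) =
      ((∫ w in Ioo (0 : ℝ) 1, w ^ (c - 1) * (1 - w) ^ (b - 1) : ℝ) : ℂ) := by
    rw [← integral_complex_ofReal]
    refine setIntegral_congr_fun measurableSet_Ioo fun x ⟨hx1, hx2⟩ => ?_
    norm_cast
    rw [← Complex.ofReal_cpow hx1.le, ← Complex.ofReal_cpow (by linarith)]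
    norm_cast
  rw [e, Complex.ofReal_re]

theorem beta_log_integral {c : ℝ} (hc : 0 < c) :
    IntegrableOn (fun w : ℝ => w ^ (c - 1) * ((1 - w) * Real.log (1 - w))) (Ioo 0 1) ∧
    ∫ w in Ioo (0 : ℝ) 1, w ^ (c - 1) * ((1 - w) * Real.log (1 - w)) =
      (digamma 2 - digamma (c + 2)) / (c * (c + 1)) := by
  have hint : IntegrableOn (fun w : ℝ => w ^ (c - 1)) (Ioo 0 1) :=
    (intervalIntegral.integrableOn_Ioo_rpow_iff one_pos).2 (by linarith)
  have key := hasDerivAt_integral_of_dominated_loc_of_deriv_le (μ := volume.restrict (Ioo 0 1))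
    (F := fun (b : ℝ) (w : ℝ) => w ^ (c - 1) * (1 - w) ^ (b - 1)) (x₀ := (2 : ℝ))
    (s := Ioi (3 / 2))
    (F' := fun (b : ℝ) (w : ℝ) => w ^ (c - 1) * ((1 - w) ^ (b - 1) * Real.log (1 - w)))
    (bound := fun w => w ^ (c - 1) * 2) (Ioi_mem_nhds (by norm_num))
    (Eventually.of_forall fun b => by fun_prop) (.of_integral_ne_zero ?_) (by fun_prop) ?_
    (hint.mul_const 2) ?_
  · obtain ⟨h1, h2⟩ := key
    have e : (fun w : ℝ => w ^ (c - 1) * ((1 - w) ^ ((2 : ℝ) - 1) * Real.log (1 - w))) =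
        fun w : ℝ => w ^ (c - 1) * ((1 - w) * Real.log (1 - w)) := by
      funext w
      norm_num
    rw [e] at h1 h2
    refine ⟨h1, ?_⟩
    have hg := Real.Gamma_pos_of_pos hc
    have h3 : HasDerivAt (fun b : ℝ => Real.exp (Real.log (Real.Gamma c) +
        Real.log (Real.Gamma b) - Real.log (Real.Gamma (b + c)))) _ 2 :=
      (((hasDerivAt_log_Gamma two_pos).const_add _).sub
        (HasDerivAt.comp_add_const 2 c (hasDerivAt_log_Gamma (by linarith)))).exp
    have hb : ∀ b : ℝ, 0 < b → Real.exp (Real.log (Real.Gamma c) +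
        Real.log (Real.Gamma b) - Real.log (Real.Gamma (b + c))) =
        ∫ w in Ioo (0 : ℝ) 1, w ^ (c - 1) * (1 - w) ^ (b - 1) := fun b hb => by
      rw [integral_rpow_mul_one_sub_rpow hc hb, Real.exp_sub, Real.exp_add, Real.exp_log hg,
        Real.exp_log (Real.Gamma_pos_of_pos hb), Real.exp_log (Real.Gamma_pos_of_pos (by linarith)),
        add_comm]
    have h4 := h2.unique (h3.congr_of_eventuallyEq (by
      filter_upwards [lt_mem_nhds two_pos] with b hb' using (hb b hb').symm))
    simp only [Pi.sub_apply] at h4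
    rw [h4, hb 2 two_pos, integral_rpow_mul_one_sub_rpow hc two_pos, Real.Gamma_two,
      show c + 2 = c + 1 + 1 by ring, Real.Gamma_add_one (by positivity),
      Real.Gamma_add_one (by positivity), show 2 + c = c + 1 + 1 by ring]
    field_simp
  · rw [integral_rpow_mul_one_sub_rpow hc two_pos]
    have := Real.Gamma_pos_of_pos hc
    have := Real.Gamma_pos_of_pos (show 0 < c + 2 by linarith)
    simp only [Real.Gamma_two]
    positivity
  · refine ae_restrict_of_forall_mem measurableSet_Ioo fun w ⟨hw0, hw1⟩ b hb => ?_
    have hb' : 3 / 2 < b := hb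
    have h0 : 0 < 1 - w := by linarith
    rw [norm_mul, Real.norm_of_nonneg (by positivity)]
    gcongr
    have h1 := Real.abs_log_mul_self_rpow_lt (1 - w) (1 / 2) h0 (by linarith) (by norm_num)
    rw [norm_mul, Real.norm_of_nonneg (by positivity), Real.norm_eq_abs]
    have h2 : (1 - w) ^ (b - 1) ≤ (1 - w) ^ (1 / 2 : ℝ) :=
      Real.rpow_le_rpow_of_exponent_ge h0 (by linarith) (by linarith)
    rw [abs_mul, abs_of_pos (show 0 < (1 - w) ^ (1 / 2 : ℝ) by positivity)] at h1
    calc _ ≤ (1 - w) ^ (1 / 2 : ℝ) * |Real.log (1 - w)| := by gcongr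
      _ ≤ 2 := by rw [mul_comm]; norm_num at h1 ⊢; exact h1.le
  · refine ae_restrict_of_forall_mem measurableSet_Ioo fun w ⟨hw0, hw1⟩ b _ => ?_
    have h0 : 0 < 1 - w := by linarith
    refine HasDerivAt.const_mul _ ?_
    have := ((hasDerivAt_id b).sub_const 1).const_rpow h0
    refine this.congr_deriv ?_
    simp
    ring

theorem integrable_exp_mul_exp_neg_mul_cosh {z : ℝ} (hz : 0 < z) :
    Integrable fun t : ℝ => Real.exp t * Real.exp (-z * Real.cosh t) := by
  have h := integrable_cexp_quadratic (b := ((z / 4 : ℝ) : ℂ)) (by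
    rw [Complex.ofReal_re]; positivity) 1 0
  refine h.norm.mono' (by fun_prop) (Eventually.of_forall fun t => ?_)
  rw [Complex.norm_exp, Real.norm_of_nonneg (by positivity), ← Real.exp_add]
  have e : (-((z / 4 : ℝ) : ℂ) * (t : ℂ) ^ 2 + 1 * t + 0).re = -(z / 4) * t ^ 2 + t := by
    norm_cast
    simp
  rw [e, Real.exp_le_exp]
  have h2 : t ^ 2 / 4 ≤ Real.cosh t := by
    rw [Real.cosh_eq]
    rcases le_total 0 t with h | h
    · have := Real.quadratic_le_exp_of_nonneg h
      nlinarith [Real.exp_pos (-t), Real.add_one_le_exp (-t)]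
    · have := Real.quadratic_le_exp_of_nonneg (x := -t) (by linarith)
      nlinarith [Real.exp_pos t, Real.add_one_le_exp t]
  nlinarith

theorem integral_exp_mul_exp_neg_mul_cosh {z : ℝ} (hz : 0 < z) :
    ∫ t : ℝ, Real.exp t * Real.exp (-z * Real.cosh t) = 2 * besselK1 z := by
  have h1 := integrable_exp_mul_exp_neg_mul_cosh hz
  have h2 : ∫ t : ℝ, Real.exp (-t) * Real.exp (-z * Real.cosh t) =
      ∫ t : ℝ, Real.exp t * Real.exp (-z * Real.cosh t) := by
    rw [← integral_neg_eq_self]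
    simp
  have h3 : Integrable fun t : ℝ => Real.exp (-t) * Real.exp (-z * Real.cosh t) := by
    simpa using h1.comp_neg
  have h4 := integral_add h1 h3
  rw [h2] at h4
  have h5 := integral_comp_abs (f := fun t => Real.exp (-z * Real.cosh t) * Real.cosh t)
  simp only [Real.cosh_abs] at h5
  have h6 : ∫ t : ℝ, (Real.exp t * Real.exp (-z * Real.cosh t) +
      Real.exp (-t) * Real.exp (-z * Real.cosh t)) =
      2 * ∫ t : ℝ, Real.exp (-z * Real.cosh t) * Real.cosh t := by
    rw [← integral_const_mul]
    refine integral_congr_ae (Eventually.of_forall fun t => ?_)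
    simp only
    rw [← add_mul, ← Real.cosh_add_sinh t, ← Real.cosh_sub_sinh t]
    ring
  rw [besselK1]
  linarith

theorem integral_inv_cube_mul_exp {p q : ℝ} (hp : 0 < p) (hq : 0 < q) :
    ∫ x in Ioi (0 : ℝ), (x ^ 3)⁻¹ * Real.exp (-(p ^ 2 * x ^ 2 + q ^ 2 / x ^ 2)) =
      p / q * besselK1 (2 * (p * q)) := by
  set r := √(q / p)
  have hr : 0 < r := Real.sqrt_pos.2 (by positivity)
  have hr2 : r ^ 2 = q / p := Real.sq_sqrt (by positivity)
  have hs : (fun t : ℝ => r * Real.exp (-t / 2)) '' univ = Ioi 0 := by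
    ext y
    constructor
    · rintro ⟨x, -, rfl⟩
      exact mul_pos hr (Real.exp_pos _)
    · intro hy
      have hy' : 0 < y := hy
      refine ⟨-(2 * Real.log (y / r)), trivial, ?_⟩
      simp only
      rw [show -(-(2 * Real.log (y / r))) / 2 = Real.log (y / r) by ring,
        Real.exp_log (by positivity)]
      field_simp
  have hd : ∀ t ∈ univ, HasDerivWithinAt (fun t : ℝ => r * Real.exp (-t / 2))
      (r * (Real.exp (-t / 2) * (-1 / 2))) univ t := fun t _ =>
    ((((hasDerivAt_id t).neg.div_const 2).exp).const_mul r).hasDerivWithinAt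
  have hi : InjOn (fun t : ℝ => r * Real.exp (-t / 2)) univ := by
    intro x _ y _ hxy
    have := Real.exp_injective (mul_left_cancel₀ hr.ne' hxy)
    linarith
  rw [← hs, integral_image_eq_integral_abs_deriv_smul MeasurableSet.univ hd hi, setIntegral_univ]
  have e : ∀ t : ℝ, |r * (Real.exp (-t / 2) * (-1 / 2))| • (((r * Real.exp (-t / 2)) ^ 3)⁻¹ *
      Real.exp (-(p ^ 2 * (r * Real.exp (-t / 2)) ^ 2 + q ^ 2 / (r * Real.exp (-t / 2)) ^ 2))) =
      p / q / 2 * (Real.exp t * Real.exp (-(2 * (p * q)) * Real.cosh t)) := by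
    intro t
    have h1 : (r * Real.exp (-t / 2)) ^ 2 = q / p * Real.exp (-t) := by
      rw [mul_pow, hr2, ← Real.exp_nat_mul]
      congr 2
      push_cast
      ring
    have h2 : |r * (Real.exp (-t / 2) * (-1 / 2))| = r * Real.exp (-t / 2) / 2 := by
      rw [show r * (Real.exp (-t / 2) * (-1 / 2)) = -(r * Real.exp (-t / 2) / 2) by ring, abs_neg,
        abs_of_pos (by positivity)]
    rw [smul_eq_mul, h2, pow_succ (r * Real.exp (-t / 2)) 2, h1]
    have h3 : p ^ 2 * (q / p * Real.exp (-t)) + q ^ 2 / (q / p * Real.exp (-t)) =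
        2 * (p * q) * Real.cosh t := by
      rw [Real.cosh_eq, Real.exp_neg]
      field_simp
      ring
    rw [h3, ← neg_mul, Real.exp_neg]
    field_simp
  simp_rw [e]
  rw [integral_const_mul, integral_exp_mul_exp_neg_mul_cosh (by positivity)]
  ring

/-- The density of the channel output for a Rayleigh input, with noise power `s` and
signal power `S`. -/
noncomputable def outputDensity (s S y : ℝ) : ℝ :=
  2 * y / S * (Real.exp (-(s + S)⁻¹ * y ^ 2) - Real.exp (-s⁻¹ * y ^ 2))

section OutputDensity

variable {s S : ℝ}

theorem integrableOn_outputDensity_mul (hs : 0 < s) (hS : 0 < S) {g : ℝ → ℝ}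
    (hg : ∀ a : ℝ, 0 < a → IntegrableOn (fun x => x * g x * Real.exp (-a * x ^ 2)) (Ioi 0)) :
    IntegrableOn (fun y => outputDensity s S y * g y) (Ioi 0) := by
  have h := ((hg (s + S)⁻¹ (by positivity)).sub (hg s⁻¹ (by positivity))).const_mul (2 / S)
  refine h.congr (Eventually.of_forall fun y => ?_)
  simp only [outputDensity, Pi.sub_apply]
  ring

theorem integral_outputDensity_mul (hs : 0 < s) (hS : 0 < S) {g : ℝ → ℝ}
    (hg : ∀ a : ℝ, 0 < a → IntegrableOn (fun x => x * g x * Real.exp (-a * x ^ 2)) (Ioi 0)) :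
    ∫ y in Ioi (0 : ℝ), outputDensity s S y * g y =
      2 / S * ((∫ x in Ioi (0 : ℝ), x * g x * Real.exp (-(s + S)⁻¹ * x ^ 2)) -
        ∫ x in Ioi (0 : ℝ), x * g x * Real.exp (-s⁻¹ * x ^ 2)) := by
  rw [← integral_sub (hg (s + S)⁻¹ (by positivity)) (hg s⁻¹ (by positivity)), ← integral_const_mul]
  refine integral_congr_ae (Eventually.of_forall fun y => ?_)
  simp only [outputDensity]
  ring

theorem integrableOn_mul_sq_mul_exp {a : ℝ} (ha : 0 < a) :
    IntegrableOn (fun x : ℝ => x * x ^ 2 * Real.exp (-a * x ^ 2)) (Ioi 0) := by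
  refine (integrableOn_pow_mul_exp_neg_mul_sq ha 3).congr (Eventually.of_forall fun x => ?_)
  simp only
  ring

theorem integral_mul_sq_mul_exp {a : ℝ} (ha : 0 < a) :
    ∫ x in Ioi (0 : ℝ), x * x ^ 2 * Real.exp (-a * x ^ 2) = 1 / (2 * a ^ 2) := by
  refine (integral_congr_ae (Eventually.of_forall fun x => ?_)).trans
    ((integral_pow_mul_exp_neg_mul_sq ha 1).trans (by norm_num))
  ring

theorem integrableOn_mul_one_mul_exp {a : ℝ} (ha : 0 < a) :
    IntegrableOn (fun x : ℝ => x * 1 * Real.exp (-a * x ^ 2)) (Ioi 0) := by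
  simpa using integrableOn_pow_mul_exp_neg_mul_sq ha 1

theorem integral_mul_one_mul_exp {a : ℝ} (ha : 0 < a) :
    ∫ x in Ioi (0 : ℝ), x * 1 * Real.exp (-a * x ^ 2) = 1 / (2 * a) := by
  simpa using integral_pow_mul_exp_neg_mul_sq ha 0

theorem integral_outputDensity (hs : 0 < s) (hS : 0 < S) :
    ∫ y in Ioi (0 : ℝ), outputDensity s S y * 1 = 1 := by
  rw [integral_outputDensity_mul hs hS (g := fun _ => 1) fun a ha => integrableOn_mul_one_mul_exp ha,
    integral_mul_one_mul_exp (by positivity), integral_mul_one_mul_exp (by positivity)]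
  field_simp
  ring

theorem integral_outputDensity_mul_sq (hs : 0 < s) (hS : 0 < S) :
    ∫ y in Ioi (0 : ℝ), outputDensity s S y * y ^ 2 = 2 * s + S := by
  rw [integral_outputDensity_mul hs hS (g := fun y => y ^ 2)
      fun a ha => integrableOn_mul_sq_mul_exp ha,
    integral_mul_sq_mul_exp (by positivity), integral_mul_sq_mul_exp (by positivity)]
  field_simp
  ring

theorem integral_outputDensity_mul_log (hs : 0 < s) (hS : 0 < S) :
    ∫ y in Ioi (0 : ℝ), outputDensity s S y * Real.log y =
      (digamma 1 + (1 + s / S) * Real.log (s + S) - s / S * Real.log s) / 2 := by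
  rw [integral_outputDensity_mul hs hS fun a ha => integrableOn_mul_log_mul_exp ha,
    integral_mul_log_mul_exp (by positivity), integral_mul_log_mul_exp (by positivity),
    Real.log_inv, Real.log_inv]
  field_simp
  ring

theorem outputDensity_log_one_sub_exp (hs : 0 < s) (hS : 0 < S) :
    IntegrableOn (fun y => outputDensity s S y *
      Real.log (1 - Real.exp (-(S / (s * (s + S))) * y ^ 2))) (Ioi 0) ∧
    ∫ y in Ioi (0 : ℝ), outputDensity s S y *
      Real.log (1 - Real.exp (-(S / (s * (s + S))) * y ^ 2)) =
      digamma 2 - digamma (s / S + 2) := by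
  set κ := S / (s * (s + S)) with hκ
  have hκ0 : 0 < κ := by positivity
  set c := s / S with hc
  have hc0 : 0 < c := by positivity
  obtain ⟨hi, hv⟩ := beta_log_integral hc0
  have himg : (fun y : ℝ => Real.exp (-κ * y ^ 2)) '' Ioi 0 = Ioo 0 1 := by
    ext w
    constructor
    · rintro ⟨y, hy, rfl⟩
      have hy' : 0 < y := hy
      refine ⟨Real.exp_pos _, Real.exp_lt_one_iff.2 ?_⟩
      have : 0 < κ * y ^ 2 := by positivity
      linarith
    · rintro ⟨h0, h1⟩
      have hl : 0 < -Real.log w / κ := div_pos (neg_pos.2 (Real.log_neg h0 h1)) hκ0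
      refine ⟨√(-Real.log w / κ), Real.sqrt_pos.2 hl, ?_⟩
      simp only
      rw [Real.sq_sqrt hl.le, show -κ * (-Real.log w / κ) = Real.log w by field_simp,
        Real.exp_log h0]
  have hd : ∀ y ∈ Ioi (0 : ℝ), HasDerivWithinAt (fun y : ℝ => Real.exp (-κ * y ^ 2))
      (-(2 * κ * y * Real.exp (-κ * y ^ 2))) (Ioi 0) y := by
    intro y _
    have := (((hasDerivAt_pow 2 y).const_mul (-κ)).exp).hasDerivWithinAt (s := Ioi 0)
    refine this.congr_deriv ?_
    norm_num
    ring
  have hinj : InjOn (fun y : ℝ => Real.exp (-κ * y ^ 2)) (Ioi 0) := by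
    intro x hx y hy hxy
    have hx' : 0 < x := hx
    have hy' : 0 < y := hy
    have := Real.exp_injective hxy
    exact (pow_left_inj₀ hx'.le hy'.le two_ne_zero).1
      (mul_left_cancel₀ (neg_ne_zero.2 hκ0.ne') this)
  rw [← himg, integrableOn_image_iff_integrableOn_abs_deriv_smul measurableSet_Ioi hd hinj] at hi
  rw [← himg, integral_image_eq_integral_abs_deriv_smul measurableSet_Ioi hd hinj] at hv
  have e : EqOn (fun y => c * (c + 1) * (|-(2 * κ * y * Real.exp (-κ * y ^ 2))| •
      (Real.exp (-κ * y ^ 2) ^ (c - 1) * ((1 - Real.exp (-κ * y ^ 2)) *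
        Real.log (1 - Real.exp (-κ * y ^ 2)))))) (fun y => outputDensity s S y *
      Real.log (1 - Real.exp (-κ * y ^ 2))) (Ioi 0) := by
    intro y hy
    have hy' : 0 < y := hy
    simp only
    rw [abs_neg, abs_of_pos (by positivity), smul_eq_mul, ← Real.exp_mul, outputDensity]
    have h1 : Real.exp (-κ * y ^ 2 * (c - 1)) * Real.exp (-κ * y ^ 2) =
        Real.exp (-(s + S)⁻¹ * y ^ 2) := by
      rw [← Real.exp_add]
      congr 1
      rw [hκ, hc]
      field_simp
      ring
    have h2 : Real.exp (-(s + S)⁻¹ * y ^ 2) * Real.exp (-κ * y ^ 2) =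
        Real.exp (-s⁻¹ * y ^ 2) := by
      rw [← Real.exp_add]
      congr 1
      rw [hκ]
      field_simp
      ring
    have h3 : c * (c + 1) * κ = 1 / S := by
      rw [hκ, hc]
      field_simp
    rw [← h2, ← h1]
    linear_combination (2 * y * Real.exp (-κ * y ^ 2) * Real.exp (-κ * y ^ 2 * (c - 1)) *
      ((1 - Real.exp (-κ * y ^ 2)) * Real.log (1 - Real.exp (-κ * y ^ 2)))) * h3
  refine ⟨IntegrableOn.congr_fun (hi.const_mul (c * (c + 1))) e measurableSet_Ioi, ?_⟩
  rw [← setIntegral_congr_fun measurableSet_Ioi e, integral_const_mul, hv]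
  field_simp

theorem integral_outputDensity_mul_log_self (hs : 0 < s) (hS : 0 < S) :
    ∫ y in Ioi (0 : ℝ), outputDensity s S y * Real.log (outputDensity s S y) =
      Real.log (2 / S) + (digamma 1 + (1 + s / S) * Real.log (s + S) - s / S * Real.log s) / 2 -
        (2 * s + S) / (s + S) + (digamma 2 - digamma (s / S + 2)) := by
  obtain ⟨hi, hv⟩ := outputDensity_log_one_sub_exp hs hS
  have i0 := integrableOn_outputDensity_mul hs hS (g := fun _ => 1)
    fun a ha => integrableOn_mul_one_mul_exp ha
  have i1 := integrableOn_outputDensity_mul hs hS fun a ha => integrableOn_mul_log_mul_exp ha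
  have i2 := integrableOn_outputDensity_mul hs hS (g := fun y => y ^ 2)
    fun a ha => integrableOn_mul_sq_mul_exp ha
  have e : ∫ y in Ioi (0 : ℝ), outputDensity s S y * Real.log (outputDensity s S y) =
      ∫ y in Ioi (0 : ℝ), (Real.log (2 / S) * (outputDensity s S y * 1) +
        outputDensity s S y * Real.log y - (s + S)⁻¹ * (outputDensity s S y * y ^ 2) +
        outputDensity s S y * Real.log (1 - Real.exp (-(S / (s * (s + S))) * y ^ 2))) := by
    refine setIntegral_congr_fun measurableSet_Ioi fun y hy => ?_
    have hy' : 0 < y := hy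
    set κ := S / (s * (s + S)) with hκ
    have hκ0 : 0 < κ := by positivity
    have hE : Real.exp (-κ * y ^ 2) < 1 := Real.exp_lt_one_iff.2 (by
      have : 0 < κ * y ^ 2 := by positivity
      linarith)
    have h : outputDensity s S y = 2 / S * y * Real.exp (-(s + S)⁻¹ * y ^ 2) *
        (1 - Real.exp (-κ * y ^ 2)) := by
      have h2 : Real.exp (-(s + S)⁻¹ * y ^ 2) * Real.exp (-κ * y ^ 2) =
          Real.exp (-s⁻¹ * y ^ 2) := by
        rw [← Real.exp_add]
        congr 1
        rw [hκ]
        field_simp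
        ring
      rw [outputDensity, ← h2]
      ring
    have hl : Real.log (outputDensity s S y) = Real.log (2 / S) + Real.log y -
        (s + S)⁻¹ * y ^ 2 + Real.log (1 - Real.exp (-κ * y ^ 2)) := by
      rw [h, Real.log_mul (by positivity) (by linarith), Real.log_mul (by positivity)
        (by positivity), Real.log_mul (by positivity) hy'.ne', Real.log_exp]
      ring
    simp only [hl]
    ring
  rw [e, integral_add (((i0.const_mul _).fun_add i1).sub' (i2.const_mul _)) hi,
    integral_sub ((i0.const_mul _).fun_add i1) (i2.const_mul _), integral_add (i0.const_mul _) i1,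
    integral_const_mul, integral_const_mul, hv, integral_outputDensity hs hS,
    integral_outputDensity_mul_sq hs hS, integral_outputDensity_mul_log hs hS]
  ring

end OutputDensity

local notation "μ₊" => (volume.restrict (Ioi (0 : ℝ)) : Measure ℝ)

theorem ae_pos_prod_pos : ∀ᵐ z : ℝ × ℝ ∂(Measure.prod μ₊ μ₊), 0 < z.1 ∧ 0 < z.2 := by
  rw [Measure.prod_restrict]
  exact ae_restrict_of_forall_mem (measurableSet_Ioi.prod measurableSet_Ioi)
    fun z hz => ⟨hz.1, hz.2⟩

theorem prod_marginal_fst {J : ℝ × ℝ → ℝ} {p g : ℝ → ℝ} (hJ : Measurable J) (hg : Measurable g)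
    (hJ0 : ∀ x, 0 < x → ∀ y, 0 < y → 0 ≤ J (x, y))
    (hJi : ∀ x, 0 < x → Integrable (fun y => J (x, y)) μ₊)
    (hJp : ∀ x, 0 < x → ∫ y in Ioi (0 : ℝ), J (x, y) = p x)
    (hpg : IntegrableOn (fun x => p x * g x) (Ioi 0)) :
    Integrable (fun z : ℝ × ℝ => J z * g z.1) (Measure.prod μ₊ μ₊) ∧
      ∫ z : ℝ × ℝ, J z * g z.1 ∂(Measure.prod μ₊ μ₊) = ∫ x in Ioi (0 : ℝ), p x * g x := by
  have hi : Integrable (fun z : ℝ × ℝ => J z * g z.1) (Measure.prod μ₊ μ₊) := by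
    rw [integrable_prod_iff (by fun_prop)]
    refine ⟨ae_restrict_of_forall_mem measurableSet_Ioi fun x hx => (hJi x hx).mul_const (g x), ?_⟩
    refine hpg.norm.congr (ae_restrict_of_forall_mem measurableSet_Ioi fun x hx => ?_)
    have h : ∫ y in Ioi (0 : ℝ), ‖J (x, y) * g x‖ = ∫ y in Ioi (0 : ℝ), J (x, y) * ‖g x‖ := by
      refine setIntegral_congr_fun measurableSet_Ioi fun y hy => ?_
      simp only [norm_mul, Real.norm_of_nonneg (hJ0 x hx y hy)]
    have hp : 0 ≤ p x := by
      rw [← hJp x hx]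
      exact setIntegral_nonneg measurableSet_Ioi fun y hy => hJ0 x hx y hy
    simp only
    rw [h, integral_mul_const, hJp x hx, norm_mul, Real.norm_of_nonneg hp]
  refine ⟨hi, ?_⟩
  rw [integral_prod _ hi]
  refine setIntegral_congr_fun measurableSet_Ioi fun x hx => ?_
  simp only
  rw [integral_mul_const, hJp x hx]

theorem prod_marginal_snd {J : ℝ × ℝ → ℝ} {p g : ℝ → ℝ} (hJ : Measurable J) (hg : Measurable g)
    (hJ0 : ∀ x, 0 < x → ∀ y, 0 < y → 0 ≤ J (x, y))
    (hJi : ∀ y, 0 < y → Integrable (fun x => J (x, y)) μ₊)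
    (hJp : ∀ y, 0 < y → ∫ x in Ioi (0 : ℝ), J (x, y) = p y)
    (hpg : IntegrableOn (fun x => p x * g x) (Ioi 0)) :
    Integrable (fun z : ℝ × ℝ => J z * g z.2) (Measure.prod μ₊ μ₊) ∧
      ∫ z : ℝ × ℝ, J z * g z.2 ∂(Measure.prod μ₊ μ₊) = ∫ x in Ioi (0 : ℝ), p x * g x := by
  obtain ⟨h1, h2⟩ := prod_marginal_fst (J := fun z => J z.swap) (p := p) (g := g)
    (by fun_prop) hg (fun x hx y hy => hJ0 y hy x hx) hJi hJp hpg
  refine ⟨h1.swap, ?_⟩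
  rw [← h2, ← integral_prod_swap]
  rfl

theorem prod_rescale_snd {f H : ℝ × ℝ → ℝ} {r : ℝ → ℝ} (hr : ∀ x, 0 < x → 0 < r x)
    (hf : Integrable f (Measure.prod μ₊ μ₊)) (hH : Measurable H)
    (hHf : ∀ x, 0 < x → ∀ ξ, 0 < ξ → H (x, ξ) = r x * f (x, r x * ξ)) :
    Integrable H (Measure.prod μ₊ μ₊) ∧
      ∫ z, H z ∂(Measure.prod μ₊ μ₊) = ∫ z, f z ∂(Measure.prod μ₊ μ₊) := by
  have scale : ∀ (g : ℝ → ℝ) (x : ℝ), 0 < x →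
      ∫ ξ in Ioi (0 : ℝ), r x * g (r x * ξ) = ∫ y in Ioi (0 : ℝ), g y := fun g x hx => by
    have := hr x hx
    rw [integral_const_mul, integral_comp_mul_left_Ioi g 0 this, mul_zero, smul_eq_mul]
    field_simp
  have hi : Integrable H (Measure.prod μ₊ μ₊) := by
    rw [integrable_prod_iff hH.aestronglyMeasurable]
    constructor
    · filter_upwards [hf.prod_right_ae, ae_restrict_mem measurableSet_Ioi] with x hx hx0
      have hrx := hr x hx0
      have h1 : IntegrableOn (fun ξ => f (x, r x * ξ)) (Ioi 0) := by
        rw [integrableOn_Ioi_comp_mul_left_iff (fun y => f (x, y)) 0 hrx, mul_zero]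
        exact hx
      exact IntegrableOn.congr_fun (h1.const_mul (r x)) (fun ξ hξ => (hHf x hx0 ξ hξ).symm)
        measurableSet_Ioi
    · refine hf.integral_norm_prod_left.congr
        (ae_restrict_of_forall_mem measurableSet_Ioi fun x hx => ?_)
      simp only
      rw [← scale (fun y => ‖f (x, y)‖) x hx]
      refine setIntegral_congr_fun measurableSet_Ioi fun ξ hξ => ?_
      rw [hHf x hx ξ hξ, norm_mul, Real.norm_of_nonneg (hr x hx).le]
  refine ⟨hi, ?_⟩
  rw [integral_prod _ hi, integral_prod _ hf]
  refine setIntegral_congr_fun measurableSet_Ioi fun x hx => ?_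
  rw [← scale (fun y => f (x, y)) x hx]
  exact setIntegral_congr_fun measurableSet_Ioi fun ξ hξ => hHf x hx ξ hξ

section Channel

variable {σN σS : ℝ}

theorem condDensity_pos (hN : 0 < σN) {x y : ℝ} (hx : 0 < x) (hy : 0 < y) :
    0 < condDensity σN x y := by
  have := besselI1_pos (show 0 < 2 * x * y / σN ^ 2 by positivity)
  rw [condDensity]
  positivity

theorem rayleighDensity_pos (hS : 0 < σS) {x : ℝ} (hx : 0 < x) : 0 < rayleighDensity σS x := by
  rw [rayleighDensity]
  positivity

theorem integral_condDensity (hN : 0 < σN) {x : ℝ} (hx : 0 < x) :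
    ∫ y in Ioi (0 : ℝ), condDensity σN x y = 1 := by
  have h := integral_sq_mul_exp_mul_besselI1 (b := (σN ^ 2)⁻¹) (c := 2 * x / σN ^ 2)
    (by positivity) (by positivity)
  have e : ∀ y, condDensity σN x y = 2 / (σN ^ 2 * x) * Real.exp (-(x ^ 2 / σN ^ 2)) *
      (y ^ 2 * Real.exp (-(σN ^ 2)⁻¹ * y ^ 2) * besselI1 (2 * x / σN ^ 2 * y)) := fun y => by
    rw [condDensity, show -(x ^ 2 + y ^ 2) / σN ^ 2 = -(x ^ 2 / σN ^ 2) + -(σN ^ 2)⁻¹ * y ^ 2 by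
      field_simp; ring, Real.exp_add, show 2 * x * y / σN ^ 2 = 2 * x / σN ^ 2 * y by ring]
    field_simp
  simp_rw [e]
  rw [integral_const_mul, h, show (2 * x / σN ^ 2) ^ 2 / (4 * (σN ^ 2)⁻¹) = x ^ 2 / σN ^ 2 by
    field_simp; norm_num, Real.exp_neg]
  field_simp
  norm_num

theorem integral_condDensity_mul_rayleighDensity (hN : 0 < σN) (hS : 0 < σS) {y : ℝ}
    (hy : 0 < y) :
    ∫ x in Ioi (0 : ℝ), condDensity σN x y * rayleighDensity σS x =
      outputDensity (σN ^ 2) (σS ^ 2) y := by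
  have h := integral_exp_mul_besselI1 (b := (σN ^ 2)⁻¹ + (σS ^ 2)⁻¹) (c := 2 * y / σN ^ 2)
    (by positivity) (by positivity)
  have e : EqOn (fun x => condDensity σN x y * rayleighDensity σS x) (fun x =>
      4 * y ^ 2 / (σN ^ 2 * σS ^ 2) * Real.exp (-(σN ^ 2)⁻¹ * y ^ 2) *
      (Real.exp (-((σN ^ 2)⁻¹ + (σS ^ 2)⁻¹) * x ^ 2) * besselI1 (2 * y / σN ^ 2 * x)))
      (Ioi 0) := fun x hx => by
    have hx' : 0 < x := hx
    simp only
    rw [condDensity, rayleighDensity,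
      show -((σN ^ 2)⁻¹ + (σS ^ 2)⁻¹) * x ^ 2 = -(x ^ 2 / σN ^ 2) + -x ^ 2 / σS ^ 2 by
        field_simp; ring,
      show -(x ^ 2 + y ^ 2) / σN ^ 2 = -(x ^ 2 / σN ^ 2) + -(σN ^ 2)⁻¹ * y ^ 2 by
        field_simp; ring, Real.exp_add, Real.exp_add,
      show 2 * x * y / σN ^ 2 = 2 * y / σN ^ 2 * x by ring]
    field_simp
    ring
  rw [setIntegral_congr_fun measurableSet_Ioi e, integral_const_mul, h, outputDensity]
  have h2 : Real.exp (-(σN ^ 2)⁻¹ * y ^ 2) *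
      Real.exp ((2 * y / σN ^ 2) ^ 2 / (4 * ((σN ^ 2)⁻¹ + (σS ^ 2)⁻¹))) =
      Real.exp (-(σN ^ 2 + σS ^ 2)⁻¹ * y ^ 2) := by
    rw [← Real.exp_add]
    congr 1
    field_simp
    ring
  rw [← h2]
  field_simp
  ring

theorem integral_rayleighDensity_mul {g : ℝ → ℝ} :
    ∫ x in Ioi (0 : ℝ), rayleighDensity σS x * g x =
      2 / σS ^ 2 * ∫ x in Ioi (0 : ℝ), x * g x * Real.exp (-(σS ^ 2)⁻¹ * x ^ 2) := by
  rw [← integral_const_mul]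
  refine integral_congr_ae (Eventually.of_forall fun x => ?_)
  simp only [rayleighDensity]
  rw [show -x ^ 2 / σS ^ 2 = -(σS ^ 2)⁻¹ * x ^ 2 by ring]
  ring

theorem integrableOn_rayleighDensity_mul {g : ℝ → ℝ}
    (hg : IntegrableOn (fun x => x * g x * Real.exp (-(σS ^ 2)⁻¹ * x ^ 2)) (Ioi 0)) :
    IntegrableOn (fun x => rayleighDensity σS x * g x) (Ioi 0) := by
  refine (hg.const_mul (2 / σS ^ 2)).congr (Eventually.of_forall fun x => ?_)
  simp only [rayleighDensity]
  rw [show -x ^ 2 / σS ^ 2 = -(σS ^ 2)⁻¹ * x ^ 2 by ring]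
  ring

/-- The joint density of the channel input and output. -/
noncomputable def jointDensity (σN σS : ℝ) (z : ℝ × ℝ) : ℝ :=
  condDensity σN z.1 z.2 * rayleighDensity σS z.1

theorem measurable_jointDensity : Measurable (jointDensity σN σS) := by
  have := measurable_besselI1
  unfold jointDensity condDensity rayleighDensity
  fun_prop

theorem jointDensity_nonneg (hN : 0 < σN) (hS : 0 < σS) (x : ℝ) (hx : 0 < x) (y : ℝ)
    (hy : 0 < y) : 0 ≤ jointDensity σN σS (x, y) :=
  (mul_pos (condDensity_pos hN hx hy) (rayleighDensity_pos hS hx)).le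

theorem outputDensity_pos {s S : ℝ} (hs : 0 < s) (hS : 0 < S) {y : ℝ} (hy : 0 < y) :
    0 < outputDensity s S y := by
  rw [outputDensity]
  refine mul_pos (by positivity) (sub_pos.2 (Real.exp_lt_exp.2 ?_))
  have : (s + S)⁻¹ < s⁻¹ := inv_strictAnti₀ hs (by linarith)
  have : 0 < y ^ 2 := by positivity
  nlinarith

theorem jointDensity_mul_fst (hN : 0 < σN) (hS : 0 < σS) {g : ℝ → ℝ} (hg : Measurable g)
    (hgi : IntegrableOn (fun x => x * g x * Real.exp (-(σS ^ 2)⁻¹ * x ^ 2)) (Ioi 0)) :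
    Integrable (fun z : ℝ × ℝ => jointDensity σN σS z * g z.1) (Measure.prod μ₊ μ₊) ∧
      ∫ z : ℝ × ℝ, jointDensity σN σS z * g z.1 ∂(Measure.prod μ₊ μ₊) =
        ∫ x in Ioi (0 : ℝ), rayleighDensity σS x * g x := by
  refine prod_marginal_fst measurable_jointDensity hg (jointDensity_nonneg hN hS) (fun x hx => ?_)
    (fun x hx => ?_) (integrableOn_rayleighDensity_mul hgi)
  · exact Integrable.mul_const
      (.of_integral_ne_zero (by rw [integral_condDensity hN hx]; exact one_ne_zero))
      (rayleighDensity σS x)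
  · simp only [jointDensity]
    rw [integral_mul_const, integral_condDensity hN hx, one_mul]

theorem jointDensity_mul_snd (hN : 0 < σN) (hS : 0 < σS) {g : ℝ → ℝ} (hg : Measurable g)
    (hgi : ∀ a : ℝ, 0 < a → IntegrableOn (fun x => x * g x * Real.exp (-a * x ^ 2)) (Ioi 0)) :
    Integrable (fun z : ℝ × ℝ => jointDensity σN σS z * g z.2) (Measure.prod μ₊ μ₊) ∧
      ∫ z : ℝ × ℝ, jointDensity σN σS z * g z.2 ∂(Measure.prod μ₊ μ₊) =
        ∫ y in Ioi (0 : ℝ), outputDensity (σN ^ 2) (σS ^ 2) y * g y := by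
  have h : ∀ y, 0 < y → ∫ x in Ioi (0 : ℝ), jointDensity σN σS (x, y) =
      outputDensity (σN ^ 2) (σS ^ 2) y :=
    fun y hy => integral_condDensity_mul_rayleighDensity hN hS hy
  refine prod_marginal_snd measurable_jointDensity hg (jointDensity_nonneg hN hS) (fun y hy => ?_)
    h (integrableOn_outputDensity_mul (by positivity) (by positivity) hgi)
  refine .of_integral_ne_zero ?_
  rw [h y hy]
  exact (outputDensity_pos (by positivity) (by positivity) hy).ne'

theorem integrable_jointDensity_mul_log_besselI1 (hN : 0 < σN) (hS : 0 < σS) :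
    Integrable (fun z : ℝ × ℝ => jointDensity σN σS z *
      Real.log (besselI1 (2 * z.1 * z.2 / σN ^ 2))) (Measure.prod μ₊ μ₊) := by
  have hSi : 0 < (σS ^ 2)⁻¹ := by positivity
  have i0 := (jointDensity_mul_fst hN hS (g := fun _ => 1) measurable_const
    (integrableOn_mul_one_mul_exp hSi)).1
  have i1 := (jointDensity_mul_fst hN hS Real.measurable_log (integrableOn_mul_log_mul_exp hSi)).1
  have i2 := (jointDensity_mul_fst hN hS (g := fun x => x ^ 2) (by fun_prop)
    (integrableOn_mul_sq_mul_exp hSi)).1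
  have i3 := (jointDensity_mul_snd hN hS Real.measurable_log
    fun a ha => integrableOn_mul_log_mul_exp ha).1
  have i4 := (jointDensity_mul_snd hN hS (g := fun x => x ^ 2) (by fun_prop)
    fun a ha => integrableOn_mul_sq_mul_exp ha).1
  have hm := measurable_jointDensity (σN := σN) (σS := σS)
  have hI := measurable_besselI1
  refine Integrable.mono' (((i1.norm.add i3.norm).add (i0.mul_const |Real.log (σN ^ 2)|)).add
    ((i2.add i4).mul_const (σN ^ 2)⁻¹)) (by fun_prop) ?_
  filter_upwards [ae_pos_prod_pos] with ⟨x, y⟩ ⟨hx, hy⟩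
  simp only at hx hy
  have hJ := jointDensity_nonneg hN hS x hx y hy
  simp only [Pi.add_apply, norm_mul, Real.norm_eq_abs, abs_of_nonneg hJ]
  have h1 := abs_log_besselI1_le (show 0 < 2 * x * y / σN ^ 2 by positivity)
  have h2 : Real.log (2 * x * y / σN ^ 2 / 2) = Real.log x + Real.log y - Real.log (σN ^ 2) := by
    rw [show 2 * x * y / σN ^ 2 / 2 = x * y / σN ^ 2 by ring, Real.log_div (by positivity)
      (by positivity), Real.log_mul hx.ne' hy.ne']
  have h3 : |Real.log x + Real.log y - Real.log (σN ^ 2)| ≤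
      |Real.log x| + |Real.log y| + |Real.log (σN ^ 2)| :=
    (abs_sub _ _).trans (add_le_add_left (abs_add_le _ _) _)
  have h4 : 2 * x * y / σN ^ 2 ≤ (x ^ 2 + y ^ 2) * (σN ^ 2)⁻¹ := by
    rw [div_eq_mul_inv]
    gcongr
    nlinarith [sq_nonneg (x - y)]
  rw [h2] at h1
  calc jointDensity σN σS (x, y) * |Real.log (besselI1 (2 * x * y / σN ^ 2))|
      ≤ jointDensity σN σS (x, y) * (|Real.log x| + |Real.log y| + |Real.log (σN ^ 2)| +
        (x ^ 2 + y ^ 2) * (σN ^ 2)⁻¹) := by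
        gcongr
        linarith
    _ = _ := by ring

theorem integral_jointDensity_mul_log_besselI1 (hN : 0 < σN) (hS : 0 < σS) :
    ∫ z : ℝ × ℝ, jointDensity σN σS z *
      Real.log (besselI1 (2 * z.1 * z.2 / σN ^ 2)) ∂(Measure.prod μ₊ μ₊) =
    (σS ^ 2 / σN ^ 2)⁻¹ * √(1 + (σS ^ 2 / σN ^ 2)⁻¹) * Fint (σS ^ 2 / σN ^ 2) := by
  have hI := measurable_besselI1
  set p := √((σN ^ 2)⁻¹ + (σS ^ 2)⁻¹) with hp
  have hp0 : 0 < p := Real.sqrt_pos.2 (by positivity)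
  have hp2 : p ^ 2 = (σN ^ 2)⁻¹ + (σS ^ 2)⁻¹ := Real.sq_sqrt (by positivity)
  have hpN : √(1 + (σS ^ 2 / σN ^ 2)⁻¹) = p * σN := by
    rw [Real.sqrt_eq_iff_eq_sq (by positivity) (by positivity), mul_pow, hp2]
    field_simp
  obtain ⟨hi, hv⟩ := prod_rescale_snd (f := fun z : ℝ × ℝ => jointDensity σN σS z *
      Real.log (besselI1 (2 * z.1 * z.2 / σN ^ 2)))
    (H := fun z : ℝ × ℝ => σN ^ 4 / (2 * σS ^ 2) * z.2 ^ 2 * besselI1 z.2 *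
      Real.log (besselI1 z.2) * ((z.1 ^ 3)⁻¹ *
        Real.exp (-(p ^ 2 * z.1 ^ 2 + (σN * z.2 / 2) ^ 2 / z.1 ^ 2))))
    (r := fun x => σN ^ 2 / (2 * x)) (fun x hx => by positivity)
    (integrable_jointDensity_mul_log_besselI1 hN hS) (by fun_prop) (fun x hx ξ hξ => by
      simp only [jointDensity, condDensity, rayleighDensity]
      rw [show 2 * x * (σN ^ 2 / (2 * x) * ξ) / σN ^ 2 = ξ by field_simp, hp2,
        show -(((σN ^ 2)⁻¹ + (σS ^ 2)⁻¹) * x ^ 2 + (σN * ξ / 2) ^ 2 / x ^ 2) =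
          -(x ^ 2 + (σN ^ 2 / (2 * x) * ξ) ^ 2) / σN ^ 2 + -x ^ 2 / σS ^ 2 by
          field_simp; ring, Real.exp_add]
      field_simp)
  rw [← hv, integral_prod_symm _ hi, Fint, ← integral_const_mul]
  refine setIntegral_congr_fun measurableSet_Ioi fun ξ hξ => ?_
  have hξ' : 0 < ξ := hξ
  simp only
  rw [integral_const_mul, integral_inv_cube_mul_exp hp0 (by positivity), hpN,
    show 2 * (p * (σN * ξ / 2)) = p * σN * ξ by ring]
  field_simp

theorem integral_rayleighDensity_mul_integral_condDensity_mul_log (hN : 0 < σN) (hS : 0 < σS) :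
    ∫ x in Ioi (0 : ℝ), rayleighDensity σS x *
        ∫ y in Ioi (0 : ℝ), condDensity σN x y * Real.log (condDensity σN x y) =
      Real.log (2 / σN ^ 2) +
      (digamma 1 + (1 + σN ^ 2 / σS ^ 2) * Real.log (σN ^ 2 + σS ^ 2) -
        σN ^ 2 / σS ^ 2 * Real.log (σN ^ 2)) -
      (digamma 1 + Real.log (σS ^ 2)) / 2 - 2 * (σN ^ 2 + σS ^ 2) / σN ^ 2 +
      (σS ^ 2 / σN ^ 2)⁻¹ * √(1 + (σS ^ 2 / σN ^ 2)⁻¹) * Fint (σS ^ 2 / σN ^ 2) := by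
  have hSi : 0 < (σS ^ 2)⁻¹ := by positivity
  obtain ⟨i0, v0⟩ := jointDensity_mul_fst hN hS (g := fun _ => 1) measurable_const
    (integrableOn_mul_one_mul_exp hSi)
  obtain ⟨i1, v1⟩ := jointDensity_mul_fst hN hS Real.measurable_log
    (integrableOn_mul_log_mul_exp hSi)
  obtain ⟨i2, v2⟩ := jointDensity_mul_fst hN hS (g := fun x => x ^ 2) (by fun_prop)
    (integrableOn_mul_sq_mul_exp hSi)
  obtain ⟨i3, v3⟩ := jointDensity_mul_snd hN hS Real.measurable_log
    fun a ha => integrableOn_mul_log_mul_exp ha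
  obtain ⟨i4, v4⟩ := jointDensity_mul_snd hN hS (g := fun x => x ^ 2) (by fun_prop)
    fun a ha => integrableOn_mul_sq_mul_exp ha
  have i5 := integrable_jointDensity_mul_log_besselI1 hN hS
  rw [integral_rayleighDensity_mul, integral_mul_one_mul_exp hSi] at v0
  rw [integral_rayleighDensity_mul, integral_mul_log_mul_exp hSi, Real.log_inv] at v1
  rw [integral_rayleighDensity_mul, integral_mul_sq_mul_exp hSi] at v2
  rw [integral_outputDensity_mul_log (by positivity) (by positivity)] at v3
  rw [integral_outputDensity_mul_sq (by positivity) (by positivity)] at v4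
  have e : (fun z : ℝ × ℝ => jointDensity σN σS z * Real.log (condDensity σN z.1 z.2))
      =ᵐ[Measure.prod μ₊ μ₊] fun z =>
      Real.log (2 / σN ^ 2) * (jointDensity σN σS z * 1) +
      2 * (jointDensity σN σS z * Real.log z.2) - jointDensity σN σS z * Real.log z.1 -
      (σN ^ 2)⁻¹ * (jointDensity σN σS z * z.1 ^ 2) -
      (σN ^ 2)⁻¹ * (jointDensity σN σS z * z.2 ^ 2) +
      jointDensity σN σS z * Real.log (besselI1 (2 * z.1 * z.2 / σN ^ 2)) := by
    filter_upwards [ae_pos_prod_pos] with ⟨x, y⟩ ⟨hx, hy⟩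
    simp only at hx hy ⊢
    have hB := besselI1_pos (show 0 < 2 * x * y / σN ^ 2 by positivity)
    have hl : Real.log (condDensity σN x y) = Real.log (2 / σN ^ 2) + (2 * Real.log y -
        Real.log x) - (x ^ 2 + y ^ 2) * (σN ^ 2)⁻¹ +
        Real.log (besselI1 (2 * x * y / σN ^ 2)) := by
      rw [condDensity, Real.log_mul (by positivity) hB.ne', Real.log_mul (by positivity)
        (by positivity), Real.log_mul (by positivity) (by positivity), Real.log_exp,
        Real.log_div (by positivity) hx.ne', Real.log_pow]
      push_cast
      ring
    rw [hl]
    ring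
  have j1 := (i0.const_mul (Real.log (2 / σN ^ 2))).fun_add (i3.const_mul 2)
  have j2 := j1.sub' i1
  have j3 := j2.sub' (i2.const_mul (σN ^ 2)⁻¹)
  have j4 := j3.sub' (i4.const_mul (σN ^ 2)⁻¹)
  have j5 := j4.fun_add i5
  have hint : Integrable (fun z : ℝ × ℝ => jointDensity σN σS z *
      Real.log (condDensity σN z.1 z.2)) (Measure.prod μ₊ μ₊) := j5.congr e.symm
  have hprod : ∫ x in Ioi (0 : ℝ), rayleighDensity σS x *
        ∫ y in Ioi (0 : ℝ), condDensity σN x y * Real.log (condDensity σN x y) =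
      ∫ z : ℝ × ℝ, jointDensity σN σS z * Real.log (condDensity σN z.1 z.2)
        ∂(Measure.prod μ₊ μ₊) := by
    rw [integral_prod _ hint]
    refine integral_congr_ae (Eventually.of_forall fun x => ?_)
    simp only [jointDensity]
    rw [← integral_const_mul]
    refine integral_congr_ae (Eventually.of_forall fun y => ?_)
    simp only
    ring
  rw [hprod, integral_congr_ae e, integral_add j4 i5, integral_sub j3 (i4.const_mul _),
    integral_sub j2 (i2.const_mul _), integral_sub j1 i1,
    integral_add (i0.const_mul _) (i3.const_mul _), integral_const_mul, integral_const_mul,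
    integral_const_mul, integral_const_mul, v0, v1, v2, v3, v4,
    integral_jointDensity_mul_log_besselI1 hN hS]
  field_simp
  ring

end Channel

/-- Theorem 1: closed form for the mutual information I_XY = h_Y − h_{Y|X}. -/
theorem stmt_5 (σN σS ρ : ℝ) (hσN : 0 < σN) (hσS : 0 < σS) (hρ : ρ = σS ^ 2 / σN ^ 2)
    (pY : ℝ → ℝ)
    (hpY : ∀ y : ℝ, pY y = ∫ x in Ioi (0 : ℝ), condDensity σN x y * rayleighDensity σS x)
    (hY hYX : ℝ)
    (hhY : hY = -∫ y in Ioi (0 : ℝ), pY y * Real.log (pY y))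
    (hhYX : hYX = -∫ x in Ioi (0 : ℝ), rayleighDensity σS x *
        ∫ y in Ioi (0 : ℝ), condDensity σN x y * Real.log (condDensity σN x y)) :
    hY - hYX =
      Real.log (ρ * Real.sqrt (1 + ρ⁻¹)) + ρ⁻¹ * Real.log (Real.sqrt (1 + ρ)) - ρ +
        ρ⁻¹ * Real.sqrt (1 + ρ⁻¹) * Fint ρ + digamma ρ⁻¹ - digamma 1 - 1 := by
  rw [integral_rayleighDensity_mul_integral_condDensity_mul_log hσN hσS, ← hρ] at hhYX
  have hY1 : ∫ y in Ioi (0 : ℝ), pY y * Real.log (pY y) = ∫ y in Ioi (0 : ℝ),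
      outputDensity (σN ^ 2) (σS ^ 2) y * Real.log (outputDensity (σN ^ 2) (σS ^ 2) y) := by
    refine setIntegral_congr_fun measurableSet_Ioi fun y hy => ?_
    simp only [hpY y, integral_condDensity_mul_rayleighDensity hσN hσS hy]
  rw [hY1, integral_outputDensity_mul_log_self (by positivity) (by positivity)] at hhY
  have hs : 0 < σN ^ 2 := by positivity
  have hS : 0 < σS ^ 2 := by positivity
  generalize σN ^ 2 = s at *
  generalize σS ^ 2 = S at *
  have hρ0 : 0 < ρ := hρ ▸ div_pos hS hs
  have hinv : s / S = ρ⁻¹ := by rw [hρ, inv_div]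
  have hc : 0 < ρ⁻¹ := by positivity
  have hψ2 : digamma 2 = digamma 1 + 1 := by
    have := digamma_add_one one_pos
    norm_num at this
    exact this
  have hψ : digamma (ρ⁻¹ + 2) = digamma ρ⁻¹ + ρ + (ρ⁻¹ + 1)⁻¹ := by
    rw [show ρ⁻¹ + 2 = ρ⁻¹ + 1 + 1 by ring, digamma_add_one (by positivity), digamma_add_one hc,
      inv_inv]
  have hlS : Real.log S = Real.log ρ + Real.log s := by
    rw [hρ, Real.log_div hS.ne' hs.ne']
    ring
  have hlsS : Real.log (s + S) = Real.log (1 + ρ) + Real.log s := by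
    rw [← Real.log_mul (by positivity) hs.ne', hρ]
    congr 1
    field_simp
  have hl1 : Real.log (ρ * √(1 + ρ⁻¹)) = (Real.log ρ + Real.log (1 + ρ)) / 2 := by
    rw [Real.log_mul hρ0.ne' (by positivity), Real.log_sqrt (by positivity),
      show 1 + ρ⁻¹ = (1 + ρ) / ρ by field_simp; ring, Real.log_div (by positivity) hρ0.ne']
    ring
  have hrat : (2 * s + S) / (s + S) = 2 - (ρ⁻¹ + 1)⁻¹ := by
    rw [hρ]
    field_simp
    ring
  have hrat2 : 2 * (s + S) / s = 2 + 2 * ρ := by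
    rw [hρ]
    field_simp
  rw [hl1, Real.log_sqrt (by positivity), hhY, hhYX, hinv, hψ, hψ2, hlsS, hrat, hrat2,
    Real.log_div two_ne_zero hS.ne', Real.log_div two_ne_zero hs.ne', hlS]
  ring
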